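/- arXiv:1707.09846 — 6 statements merged into one kernel-verified Lean document; each statement's English description precedes it below -/
import Mathlib

section
/- Let b, d, D be integers with 1 ≤ D ≤ d ≤ b and β := b − D ≥ 2, and set c(n) := c_{b,β}(n/d) for integers n ≥ 0. Suppose that d = b, or d = b − 1, or D ≤ b/2. Then for every pair of integers (i,j) with either (i,j) = (d,d) or 0 ≤ j and j + D ≤ i ≤ d, and all integers n, m, k with k ≥ 0, d·b^k ≤ n < d·b^{k+1}, and j·b^k ≤ m, one has c(n) − c(n − i·b^k) ≥ c(m) − c(m − j·b^k). -/
/-- The `i`-th base-`b` digit (for `i : ℤ`) of a real number `x ≥ 0`: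
`⌊x·b^{−i}⌋ mod b`. -/
noncomputable def bDigit (b : ℕ) (x : ℝ) (i : ℤ) : ℤ :=
  ⌊x * (b : ℝ) ^ (-i)⌋ % b

/-- The `(b,β)`-content of a real number `x ≥ 0`: read the base-`b` digits of `x`
in base `β`. -/
noncomputable def content (b β : ℕ) (x : ℝ) : ℝ :=
  ∑' i : ℤ, (bDigit b x i : ℝ) * (β : ℝ) ^ i

/-!
Write `c` for the content. Each carry in a base-`b` addition lowers the content, so `c` is
subadditive, and `c (b ^ k * x) = β ^ k * c x` reduces everything to `k = 0`. There, for
`1 ≤ n / d < b`, subtracting `1` from `n / d` lowers the content by exactly `1`, and two uses of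
subadditivity reduce the claim to `c (j / d) + c (1 - i / d) ≤ 1`.

This follows from the linear bound `(d - D) * c (u / d) ≤ u` for `0 ≤ u < d ≤ b`. One step
`u * b = a * d + r` of long division gives `β * c (u / d) = a + c (r / d)`, and `u ≤ a` because
`d ≤ b`; hence `h u = (d - D) * c (u / d) - u` satisfies `β * h u ≤ h r`, so the maximum of `h` on
`{0, …, d - 1}` is at most `0`.
-/

open Filter

section Content

variable {b β : ℕ} {x y : ℝ}

theorem summable_mul_zpow_of_bounded {q : ℝ} (hq : 1 < q) {f : ℤ → ℝ} {C : ℝ}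
    (hf : ∀ i, |f i| ≤ C) (hf0 : ∀ᶠ i in atTop, f i = 0) :
    Summable fun i : ℤ ↦ f i * q ^ i := by
  obtain ⟨N, hN⟩ := eventually_atTop.1 hf0
  refine Summable.of_nat_of_neg ?_ ?_
  · refine summable_of_ne_finset_zero (s := Finset.range N.toNat) fun i hi ↦ ?_
    rw [Finset.mem_range, not_lt] at hi
    rw [hN i (by omega), zero_mul]
  · have hgeo : Summable fun n : ℕ ↦ C * q⁻¹ ^ n :=
      (summable_geometric_of_lt_one (by positivity) (inv_lt_one_of_one_lt₀ hq)).mul_left C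
    refine hgeo.of_norm_bounded fun n ↦ ?_
    have hqn : 0 ≤ q⁻¹ ^ n := by positivity
    rw [Real.norm_eq_abs, abs_mul, zpow_neg, zpow_natCast, ← inv_pow, abs_of_nonneg hqn]
    exact mul_le_mul_of_nonneg_right (hf _) hqn

theorem floor_mul_zpow_neg_eq_zero {i : ℤ} (hx : 0 ≤ x) (hxi : x < (b : ℝ) ^ i) :
    ⌊x * (b : ℝ) ^ (-i)⌋ = 0 := by
  refine Int.floor_eq_zero_iff.2 ⟨by positivity, ?_⟩
  rwa [zpow_neg, ← div_eq_mul_inv, div_lt_one (hx.trans_lt hxi)]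

theorem eventually_floor_mul_zpow_neg_eq_zero (hb : 1 < b) (hx : 0 ≤ x) :
    ∀ᶠ i : ℤ in atTop, ⌊x * (b : ℝ) ^ (-i)⌋ = 0 := by
  have hb' : (1 : ℝ) < b := by exact_mod_cast hb
  obtain ⟨N, hN⟩ := pow_unbounded_of_one_lt x hb'
  filter_upwards [eventually_ge_atTop (N : ℤ)] with i hi
  refine floor_mul_zpow_neg_eq_zero hx (hN.trans_le ?_)
  rw [← zpow_natCast]
  exact zpow_le_zpow_right₀ hb'.le hi

theorem abs_bDigit_le (hb : 0 < b) (x : ℝ) (i : ℤ) : |(bDigit b x i : ℝ)| ≤ b := by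
  have h_nonneg : 0 ≤ bDigit b x i := Int.emod_nonneg _ (by omega)
  have h_lt : bDigit b x i < b := Int.emod_lt_of_pos _ (by omega)
  rw [abs_of_nonneg (by exact_mod_cast h_nonneg)]
  exact_mod_cast h_lt.le

theorem summable_bDigit_mul_zpow (hb : 1 < b) (hβ : 1 < β) (hx : 0 ≤ x) :
    Summable fun i : ℤ ↦ (bDigit b x i : ℝ) * (β : ℝ) ^ i := by
  refine summable_mul_zpow_of_bounded (by exact_mod_cast hβ) (abs_bDigit_le (by omega) x) ?_
  filter_upwards [eventually_floor_mul_zpow_neg_eq_zero hb hx] with i hi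
  rw [bDigit, hi, Int.zero_emod, Int.cast_zero]

theorem bDigit_eq_floor_sub_floor (hb : b ≠ 0) (x : ℝ) (i : ℤ) :
    bDigit b x i = ⌊x * (b : ℝ) ^ (-i)⌋ - b * ⌊x * (b : ℝ) ^ (-(i + 1))⌋ := by
  have h : x * (b : ℝ) ^ (-(i + 1)) = x * (b : ℝ) ^ (-i) / b := by
    rw [neg_add, zpow_add₀ (Nat.cast_ne_zero.2 hb), zpow_neg_one, ← mul_assoc, div_eq_mul_inv]
  rw [h, Int.floor_div_natCast, bDigit, Int.emod_def]

theorem content_zero (b β : ℕ) : content b β 0 = 0 := by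
  simp [content, bDigit]

theorem content_zpow_mul (hb : b ≠ 0) (hβ : β ≠ 0) (k : ℤ) (x : ℝ) :
    content b β ((b : ℝ) ^ k * x) = (β : ℝ) ^ k * content b β x := by
  have hdigit (i : ℤ) : bDigit b ((b : ℝ) ^ k * x) (i + k) = bDigit b x i := by
    rw [bDigit, bDigit, mul_right_comm, ← zpow_add₀ (Nat.cast_ne_zero.2 hb),
      show k + -(i + k) = -i by ring, mul_comm]
  rw [content, content, ← (Equiv.addRight k).tsum_eq, ← tsum_mul_left]
  refine tsum_congr fun i ↦ ?_
  rw [Equiv.coe_addRight, hdigit, zpow_add₀ (Nat.cast_ne_zero.2 hβ)]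
  ring

/-- The carry into position `i` of the base-`b` addition `x + y`. -/
noncomputable def addCarry (b : ℕ) (x y : ℝ) (i : ℤ) : ℤ :=
  ⌊(x + y) * (b : ℝ) ^ (-i)⌋ - ⌊x * (b : ℝ) ^ (-i)⌋ - ⌊y * (b : ℝ) ^ (-i)⌋

theorem addCarry_nonneg (b : ℕ) (x y : ℝ) (i : ℤ) : 0 ≤ addCarry b x y i := by
  have := Int.le_floor_add (x * (b : ℝ) ^ (-i)) (y * (b : ℝ) ^ (-i))
  rw [addCarry, add_mul]
  omega

theorem addCarry_le_one (b : ℕ) (x y : ℝ) (i : ℤ) : addCarry b x y i ≤ 1 := by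
  have := Int.le_floor_add_floor (x * (b : ℝ) ^ (-i)) (y * (b : ℝ) ^ (-i))
  rw [addCarry, add_mul]
  omega

theorem bDigit_add (hb : b ≠ 0) (x y : ℝ) (i : ℤ) :
    bDigit b (x + y) i =
      bDigit b x i + bDigit b y i + addCarry b x y i - b * addCarry b x y (i + 1) := by
  simp only [bDigit_eq_floor_sub_floor hb, addCarry]
  ring

theorem summable_addCarry_mul_zpow (hb : 1 < b) (hβ : 1 < β) (hx : 0 ≤ x) (hy : 0 ≤ y) :
    Summable fun i : ℤ ↦ (addCarry b x y i : ℝ) * (β : ℝ) ^ i := by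
  refine summable_mul_zpow_of_bounded (C := 1) (by exact_mod_cast hβ) (fun i ↦ ?_) ?_
  · rw [abs_of_nonneg (by exact_mod_cast addCarry_nonneg b x y i)]
    exact_mod_cast addCarry_le_one b x y i
  · filter_upwards [eventually_floor_mul_zpow_neg_eq_zero hb hx,
      eventually_floor_mul_zpow_neg_eq_zero hb hy,
      eventually_floor_mul_zpow_neg_eq_zero hb (add_nonneg hx hy)] with i hxi hyi hxyi
    rw [addCarry, hxi, hyi, hxyi, sub_self, sub_self, Int.cast_zero]

theorem content_add (hb : 1 < b) (hβ : 1 < β) (hx : 0 ≤ x) (hy : 0 ≤ y) :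
    content b β (x + y) = content b β x + content b β y -
      (b - β) / β * ∑' i : ℤ, (addCarry b x y i : ℝ) * (β : ℝ) ^ i := by
  have hβ0 : (β : ℝ) ≠ 0 := by positivity
  have hcarry := (summable_addCarry_mul_zpow hb hβ hx hy).hasSum
  have hcarry_succ := ((Equiv.addRight (1 : ℤ)).hasSum_iff.2 hcarry).mul_left (b / β : ℝ)
  have hdigits := (summable_bDigit_mul_zpow hb hβ hx).hasSum.add
    (summable_bDigit_mul_zpow hb hβ hy).hasSum
  rw [content, tsum_congr fun i ↦ ?_, ((hdigits.add hcarry).sub hcarry_succ).tsum_eq]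
  · rw [content, content]
    field_simp
    ring
  · rw [bDigit_add (by omega), Function.comp_apply, Equiv.coe_addRight, zpow_add_one₀ hβ0]
    push_cast
    field_simp

theorem content_add_le (hβ : 1 < β) (hβb : β ≤ b) (hx : 0 ≤ x) (hy : 0 ≤ y) :
    content b β (x + y) ≤ content b β x + content b β y := by
  have hloss : 0 ≤ (b - β : ℝ) / β * ∑' i : ℤ, (addCarry b x y i : ℝ) * (β : ℝ) ^ i := by
    refine mul_nonneg (div_nonneg (sub_nonneg.2 (by exact_mod_cast hβb)) (by positivity))
      (tsum_nonneg fun i ↦ mul_nonneg ?_ (by positivity))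
    exact_mod_cast addCarry_nonneg b x y i
  rw [content_add (by omega) hβ hx hy]
  exact sub_le_self _ hloss

theorem bDigit_add_natCast {a : ℕ} (hx : 0 ≤ x) (hxa : x + a < b) (i : ℤ) :
    bDigit b (x + a) i = bDigit b x i + if i = 0 then (a : ℤ) else 0 := by
  have hxb : x < b := lt_of_le_of_lt (le_add_of_nonneg_right a.cast_nonneg) hxa
  rcases lt_trichotomy i 0 with hi | rfl | hi
  · obtain ⟨n, rfl⟩ : ∃ n : ℕ, i = -(n + 1 : ℕ) := ⟨(-i - 1).toNat, by omega⟩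
    have ha : (a : ℝ) * (b : ℝ) ^ (n + 1) = ((b * (a * b ^ n) : ℕ) : ℝ) := by push_cast; ring
    rw [if_neg hi.ne, add_zero, bDigit, bDigit, neg_neg, zpow_natCast, add_mul, ha,
      Int.floor_add_natCast, Nat.cast_mul, Int.add_mul_emod_self_left]
  · have hfloor : ⌊x⌋ + a < b := by
      rw [← Int.floor_add_natCast]
      exact Int.floor_lt.2 (by exact_mod_cast hxa)
    have hfloor_nonneg : 0 ≤ ⌊x⌋ := Int.floor_nonneg.2 hx
    simp only [bDigit, neg_zero, zpow_zero, mul_one, Int.floor_add_natCast, if_true]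
    rw [Int.emod_eq_of_lt (by omega) hfloor, Int.emod_eq_of_lt hfloor_nonneg (by omega)]
  · have hb : (1 : ℝ) ≤ b := Nat.one_le_cast.2 (Nat.cast_pos.1 (hx.trans_lt hxb))
    have hbi : (b : ℝ) ≤ (b : ℝ) ^ i := by
      simpa using zpow_le_zpow_right₀ hb (show 1 ≤ i from hi)
    rw [if_neg hi.ne', add_zero, bDigit, bDigit,
      floor_mul_zpow_neg_eq_zero (by positivity) (hxa.trans_le hbi),
      floor_mul_zpow_neg_eq_zero hx (hxb.trans_le hbi)]

theorem content_add_natCast (hb : 1 < b) (hβ : 1 < β) {a : ℕ} (hx : 0 ≤ x) (hxa : x + a < b) :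
    content b β (x + a) = content b β x + a := by
  have hterm (i : ℤ) : (bDigit b (x + a) i : ℝ) * (β : ℝ) ^ i =
      bDigit b x i * (β : ℝ) ^ i + if i = 0 then (a : ℝ) else 0 := by
    rw [bDigit_add_natCast hx hxa]
    split_ifs with hi <;> simp [hi]
  rw [content, tsum_congr hterm]
  exact ((summable_bDigit_mul_zpow hb hβ hx).hasSum.add (hasSum_ite_eq 0 (a : ℝ))).tsum_eq

theorem content_one (hb : 1 < b) (hβ : 1 < β) : content b β 1 = 1 := by
  simpa [content_zero] using content_add_natCast (x := 0) (a := 1) hb hβ le_rfl (by simpa using hb)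

theorem content_sub_one (hb : 1 < b) (hβ : 1 < β) (hy : 1 ≤ y) (hyb : y < b) :
    content b β (y - 1) = content b β y - 1 := by
  have h := content_add_natCast (x := y - 1) (a := 1) hb hβ (sub_nonneg.2 hy) (by simpa using hyb)
  rw [Nat.cast_one, sub_add_cancel] at h
  rw [h, add_sub_cancel_right]

theorem mul_content_div (hb : 1 < b) (hβ : 1 < β) {d u : ℕ} (hu : u < d) :
    β * content b β (u / d) = (u * b / d : ℕ) + content b β ((u * b % d : ℕ) / d) := by
  have hd : 0 < d := by omega
  have hd' : (0 : ℝ) < d := by exact_mod_cast hd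
  have hdiv : (b : ℝ) * (u / d) = (u * b % d : ℕ) / d + (u * b / d : ℕ) := by
    field_simp
    exact_mod_cast (mul_comm b u).trans (Nat.mod_add_div (u * b) d).symm
  have hlt : (b : ℝ) * (u / d) < b :=
    mul_lt_of_lt_one_right (by positivity) ((div_lt_one hd').2 (by exact_mod_cast hu))
  have hscale := content_zpow_mul (b := b) (β := β) (by omega) (by omega) 1 (u / d)
  rw [zpow_one, zpow_one] at hscale
  rw [← hscale, hdiv, content_add_natCast hb hβ (by positivity) (hdiv ▸ hlt), add_comm]

end Content

theorem nonpos_of_forall_exists_mul_le {α : Type*} {s : Finset α} {q : ℝ} (hq : 1 < q) {f : α → ℝ}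
    (hf : ∀ u ∈ s, ∃ r ∈ s, q * f u ≤ f r) {u : α} (hu : u ∈ s) : f u ≤ 0 := by
  obtain ⟨w, hw, hmax⟩ := s.exists_max_image f ⟨u, hu⟩
  obtain ⟨r, hr, hwr⟩ := hf w hw
  have hw_le : q * f w ≤ f w := hwr.trans (hmax r hr)
  have hw_nonpos : f w ≤ 0 := by nlinarith
  exact (hmax u hu).trans hw_nonpos

section Step

variable {b β D d : ℕ}

theorem sub_mul_content_div_le (hβ : 1 < β) (hb : β + D = b) (hdb : d ≤ b) {u : ℕ} (hu : u < d) :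
    (d - D : ℝ) * content b β (u / d) ≤ u := by
  suffices h : ∀ v ∈ Finset.range d, ∃ r ∈ Finset.range d,
      β * ((d - D : ℝ) * content b β (v / d) - v) ≤ (d - D : ℝ) * content b β (r / d) - r from
    sub_nonpos.1 (nonpos_of_forall_exists_mul_le (by exact_mod_cast hβ) h (Finset.mem_range.2 hu))
  intro v hv
  rw [Finset.mem_range] at hv
  have hd : 0 < d := by omega
  refine ⟨v * b % d, Finset.mem_range.2 (Nat.mod_lt _ hd), ?_⟩
  have hstep := mul_content_div (b := b) (by omega) hβ hv
  have hdiv : (d : ℝ) * (v * b / d : ℕ) + (v * b % d : ℕ) = v * b := by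
    exact_mod_cast Nat.div_add_mod (v * b) d
  have hquot : (v : ℝ) ≤ (v * b / d : ℕ) := by
    exact_mod_cast (Nat.le_div_iff_mul_le hd).2 (Nat.mul_le_mul_left v hdb)
  have hb' : (β : ℝ) + D = b := by exact_mod_cast hb
  have hloss := mul_le_mul_of_nonneg_left hquot (Nat.cast_nonneg (α := ℝ) D)
  linear_combination (d - D : ℝ) * hstep + hdiv + hloss - v * hb'

theorem content_div_add_content_div_le_one (hβ : 1 < β) (hb : β + D = b) (hD : 0 < D)
    (hdb : d ≤ b) {u v : ℕ} (huv : u + v + D ≤ d) :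
    content b β (u / d) + content b β (v / d) ≤ 1 := by
  obtain hDd | hDd := (show D ≤ d by omega).eq_or_lt
  · obtain ⟨rfl, rfl⟩ : u = 0 ∧ v = 0 := by omega
    simp [content_zero]
  have hu := sub_mul_content_div_le hβ hb hdb (show u < d by omega)
  have hv := sub_mul_content_div_le hβ hb hdb (show v < d by omega)
  have huv' : (u : ℝ) + v + D ≤ d := by exact_mod_cast huv
  have hpos : (0 : ℝ) < d - D := sub_pos.2 (by exact_mod_cast hDd)
  refine le_of_mul_le_mul_left ?_ hpos
  linarith

theorem content_sub_content_sub_le (hβ : 1 < β) (hβb : β ≤ b) {s t y z : ℝ} (hs : s ≤ 1)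
    (ht : 0 ≤ t) (hst : content b β t + content b β (1 - s) ≤ 1) (hy : 1 ≤ y) (hyb : y < b)
    (hz : t ≤ z) :
    content b β z - content b β (z - t) ≤ content b β y - content b β (y - s) := by
  have hz_add := content_add_le hβ hβb ht (sub_nonneg.2 hz)
  have hy_add := content_add_le hβ hβb (sub_nonneg.2 hy) (sub_nonneg.2 hs)
  rw [add_sub_cancel] at hz_add
  rw [sub_add_sub_cancel, content_sub_one (by omega) hβ hy hyb] at hy_add
  linarith

theorem content_sub_content_sub_mul_zpow_le (hβ : 1 < β) (hβb : β ≤ b) {s t y z : ℝ} {k : ℤ}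
    (hs : s ≤ 1) (ht : 0 ≤ t) (hst : content b β t + content b β (1 - s) ≤ 1)
    (hy : (b : ℝ) ^ k ≤ y) (hyb : y < (b : ℝ) ^ (k + 1)) (hz : t * (b : ℝ) ^ k ≤ z) :
    content b β z - content b β (z - t * (b : ℝ) ^ k) ≤
      content b β y - content b β (y - s * (b : ℝ) ^ k) := by
  have hb : (0 : ℝ) < b := Nat.cast_pos.2 (by omega)
  have hbk : (0 : ℝ) < (b : ℝ) ^ k := zpow_pos hb k
  rw [zpow_add_one₀ hb.ne', mul_comm] at hyb
  have h := content_sub_content_sub_le hβ hβb hs ht hst ((one_le_div hbk).2 hy)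
    ((div_lt_iff₀ hbk).2 hyb) ((le_div_iff₀ hbk).2 hz)
  have hscale (p : ℝ) : content b β p = (β : ℝ) ^ k * content b β (p / (b : ℝ) ^ k) := by
    rw [← content_zpow_mul (by omega) (by omega), mul_div_cancel₀ _ hbk.ne']
  have hscale_sub (p q : ℝ) : content b β (p - q * (b : ℝ) ^ k) =
      (β : ℝ) ^ k * content b β (p / (b : ℝ) ^ k - q) := by
    rw [hscale, sub_div, mul_div_cancel_right₀ _ hbk.ne']
  rw [hscale_sub, hscale_sub, hscale z, hscale y, ← mul_sub, ← mul_sub]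
  exact mul_le_mul_of_nonneg_left h (by positivity)

theorem content_div_add_content_one_sub_div_le_one (hβ : 1 < β) (hb : β + D = b) (hD : 0 < D)
    (hd : 0 < d) (hdb : d ≤ b) {i j : ℕ} (hij : (i = d ∧ j = d) ∨ (j + D ≤ i ∧ i ≤ d)) :
    content b β (j / d) + content b β (1 - i / d) ≤ 1 := by
  have hd0 : (d : ℝ) ≠ 0 := Nat.cast_ne_zero.2 hd.ne'
  rcases hij with ⟨rfl, rfl⟩ | ⟨hji, hid⟩
  · rw [div_self hd0, sub_self, content_zero, content_one (by omega) hβ, add_zero]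
  · have h := content_div_add_content_div_le_one hβ hb hD hdb (u := j) (v := d - i) (by omega)
    rwa [Nat.cast_sub hid, sub_div, div_self hd0] at h

theorem stmt9_general (hβ : 1 < β) (hb : β + D = b) (hD : 0 < D) (hdb : d ≤ b) {i j : ℕ}
    (hij : (i = d ∧ j = d) ∨ (j + D ≤ i ∧ i ≤ d)) {n m : ℝ} {k : ℤ} (hn : d * (b : ℝ) ^ k ≤ n)
    (hn' : n < d * (b : ℝ) ^ (k + 1)) (hm : j * (b : ℝ) ^ k ≤ m) :
    content b β (m / d) - content b β ((m - j * (b : ℝ) ^ k) / d) ≤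
      content b β (n / d) - content b β ((n - i * (b : ℝ) ^ k) / d) := by
  have hd : 0 < d := Nat.pos_of_ne_zero fun h ↦ by
    rw [h, Nat.cast_zero, zero_mul] at hn hn'
    exact hn.not_gt hn'
  have hd' : (0 : ℝ) < d := Nat.cast_pos.2 hd
  have hi : (i : ℝ) / d ≤ 1 := (div_le_one hd').2 (Nat.cast_le.2 (by omega))
  have hij_le := content_div_add_content_one_sub_div_le_one hβ hb hD hd hdb hij
  rw [sub_div, sub_div, mul_div_right_comm, mul_div_right_comm]
  refine content_sub_content_sub_mul_zpow_le hβ (by omega) hi (by positivity) hij_le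
    ((le_div_iff₀' hd').2 hn) ((div_lt_iff₀' hd').2 hn') ?_
  rw [← mul_div_right_comm]
  exact div_le_div_of_nonneg_right hm hd'.le

end Step

/-- Step property of the nilgrowth witness `n ↦ c_{b,β}(n/d)`. -/
theorem stmt9 (b d D : ℕ) (hD1 : 1 ≤ D) (hDd : D ≤ d) (hdb : d ≤ b)
    (hβ : 2 ≤ b - D)
    (hcase : d = b ∨ d = b - 1 ∨ 2 * D ≤ b) :
    ∀ i j : ℕ, ((i = d ∧ j = d) ∨ (j + D ≤ i ∧ i ≤ d)) →
    ∀ n m k : ℕ, d * b ^ k ≤ n → n < d * b ^ (k + 1) → j * b ^ k ≤ m →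
      content b (b - D) ((m : ℝ) / (d : ℝ)) -
          content b (b - D) (((m - j * b ^ k : ℕ) : ℝ) / (d : ℝ)) ≤
        content b (b - D) ((n : ℝ) / (d : ℝ)) -
          content b (b - D) (((n - i * b ^ k : ℕ) : ℝ) / (d : ℝ)) := by
  intro i j hij n m k hn hn' hm
  have hin : i * b ^ k ≤ n := (Nat.mul_le_mul_right _ (by omega)).trans hn
  push_cast [Nat.cast_sub hm, Nat.cast_sub hin]
  exact stmt9_general hβ (by omega) hD1 hdb hij (k := k) (by exact_mod_cast hn)
    (by exact_mod_cast hn') (by exact_mod_cast hm)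
end

section
/- Let b ≥ 2 and β ≥ 2 be integers. Then for every natural number n ≥ 1, β^{−1}·n^{log_b β} < c_{b,β}(n) < (β·(b−1)/(β−1))·n^{log_b β}. In particular c_{b,β}(n) ≍ n^{log_b β} as n → ∞. -/
/-- The `(b,β)`-content of a natural number: write `n` in base `b` and read the
digits in base `β`. -/
def contentNat (b β n : ℕ) : ℕ :=
  Nat.ofDigits β (Nat.digits b n)

/-!
Let `L` be the number of base-`b` digits of `n ≠ 0` and `s = log_b β`. Raising
`b ^ (L - 1) ≤ n < b ^ L` to the power `s` gives `β ^ (L - 1) ≤ n ^ s < β ^ L`.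
Reading the digits of `n` in base `β` gives at least `β ^ (L - 1)`, because the leading digit is
nonzero, and at most `(b - 1) (1 + β + ⋯ + β ^ (L - 1)) < (b - 1) β ^ L / (β - 1)`.
-/

section OfDigits

variable {R : Type*} [Semiring R] [PartialOrder R] [IsOrderedRing R] {β : R}

theorem pow_length_le_mul_ofDigits (hβ : 0 ≤ β) :
    ∀ {l : List ℕ} (hl : l ≠ []), l.getLast hl ≠ 0 → β ^ l.length ≤ β * Nat.ofDigits β l
  | [a], _, ha => by
    have one_le_a : (1 : R) ≤ a := by
      simpa using Nat.mono_cast (α := R) (Nat.one_le_iff_ne_zero.2 ha)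
    simpa [Nat.ofDigits] using le_mul_of_one_le_right hβ one_le_a
  | a :: a' :: l, _, hlast => by
    rw [List.length_cons, pow_succ']
    refine mul_le_mul_of_nonneg_left ?_ hβ
    calc β ^ (a' :: l).length
        ≤ β * Nat.ofDigits β (a' :: l) :=
          pow_length_le_mul_ofDigits hβ (List.cons_ne_nil a' l) (by simpa using hlast)
      _ ≤ a + β * Nat.ofDigits β (a' :: l) := le_add_of_nonneg_left a.cast_nonneg

theorem ofDigits_le_geom_sum_mul (hβ : 0 ≤ β) {d : R} {l : List ℕ} (hl : ∀ a ∈ l, (a : R) ≤ d) :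
    Nat.ofDigits β l ≤ (∑ i ∈ Finset.range l.length, β ^ i) * d := by
  induction l with
  | nil => simp [Nat.ofDigits]
  | cons a l ih =>
    obtain ⟨ha, hl⟩ := List.forall_mem_cons.1 hl
    calc (a : R) + β * Nat.ofDigits β l
        ≤ d + β * ((∑ i ∈ Finset.range l.length, β ^ i) * d) :=
          add_le_add ha (mul_le_mul_of_nonneg_left (ih hl) hβ)
      _ = (∑ i ∈ Finset.range (l.length + 1), β ^ i) * d := by
          rw [geom_sum_succ, add_mul, one_mul, mul_assoc, add_comm]

end OfDigits

theorem pow_rpow_logb {b x : ℝ} (hb : 0 < b) (hb' : b ≠ 1) (hx : 0 < x) (k : ℕ) :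
    (b ^ k) ^ Real.logb b x = x ^ k := by
  rw [← Real.rpow_pow_comm hb.le, Real.rpow_logb hb hb' hx]

section Digits

variable {b : ℕ} {β : ℝ}

theorem rpow_logb_lt_pow_length_digits (hb : 1 < b) (hβ : 1 < β) (n : ℕ) :
    (n : ℝ) ^ Real.logb b β < β ^ (b.digits n).length := by
  have hb' : (1 : ℝ) < b := mod_cast hb
  have n_lt : (n : ℝ) < (b : ℝ) ^ (b.digits n).length :=
    mod_cast Nat.lt_base_pow_length_digits hb
  calc (n : ℝ) ^ Real.logb b β
      < ((b : ℝ) ^ (b.digits n).length) ^ Real.logb b β :=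
        Real.rpow_lt_rpow n.cast_nonneg n_lt (Real.logb_pos hb' hβ)
    _ = β ^ (b.digits n).length := pow_rpow_logb (by positivity) hb'.ne' (by positivity) _

theorem pow_length_digits_le_mul_rpow_logb (hb : 1 < b) (hβ : 1 ≤ β) {n : ℕ} (hn : n ≠ 0) :
    β ^ (b.digits n).length ≤ β * (n : ℝ) ^ Real.logb b β := by
  have hb' : (1 : ℝ) < b := mod_cast hb
  have pow_le : (b : ℝ) ^ (b.digits n).length ≤ b * n :=
    mod_cast Nat.base_pow_length_digits_le b n hb hn
  calc β ^ (b.digits n).length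
      = ((b : ℝ) ^ (b.digits n).length) ^ Real.logb b β :=
        (pow_rpow_logb (by positivity) hb'.ne' (by positivity) _).symm
    _ ≤ (b * n : ℝ) ^ Real.logb b β :=
        Real.rpow_le_rpow (by positivity) pow_le (Real.logb_nonneg hb' hβ)
    _ = β * (n : ℝ) ^ Real.logb b β := by
        rw [Real.mul_rpow b.cast_nonneg n.cast_nonneg,
          Real.rpow_logb (by positivity) hb'.ne' (by positivity)]

theorem ofDigits_digits_lt_mul_pow_length (hb : 1 < b) (hβ : 1 < β) (n : ℕ) :
    Nat.ofDigits β (b.digits n) < (b - 1) / (β - 1) * β ^ (b.digits n).length := by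
  have ratio_pos : 0 < ((b : ℝ) - 1) / (β - 1) :=
    div_pos (sub_pos.2 (mod_cast hb)) (sub_pos.2 hβ)
  have digit_le : ∀ a ∈ b.digits n, (a : ℝ) ≤ b - 1 := fun a ha ↦
    le_sub_iff_add_le.2 (mod_cast Nat.digits_lt_base hb ha)
  calc Nat.ofDigits β (b.digits n)
      ≤ (∑ i ∈ Finset.range (b.digits n).length, β ^ i) * (b - 1) :=
        ofDigits_le_geom_sum_mul (by positivity) digit_le
    _ = (b - 1) / (β - 1) * (β ^ (b.digits n).length - 1) := by
        rw [geom_sum_eq hβ.ne']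
        ring
    _ < (b - 1) / (β - 1) * β ^ (b.digits n).length :=
        mul_lt_mul_of_pos_left (sub_one_lt _) ratio_pos

theorem stmt10_general (hb : 1 < b) (hβ : 1 < β) {n : ℕ} (hn : n ≠ 0) :
    β⁻¹ * (n : ℝ) ^ Real.logb b β < Nat.ofDigits β (b.digits n) ∧
      Nat.ofDigits β (b.digits n) < β * (b - 1) / (β - 1) * (n : ℝ) ^ Real.logb b β := by
  have β_pos : 0 < β := one_pos.trans hβ
  have ratio_nonneg : 0 ≤ ((b : ℝ) - 1) / (β - 1) :=
    div_nonneg (sub_nonneg.2 (mod_cast hb.le)) (sub_nonneg.2 hβ.le)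
  constructor
  · rw [inv_mul_lt_iff₀ β_pos]
    exact (rpow_logb_lt_pow_length_digits hb hβ n).trans_le <|
      pow_length_le_mul_ofDigits β_pos.le (Nat.digits_ne_nil_iff_ne_zero.2 hn)
        (Nat.getLast_digit_ne_zero b hn)
  · calc Nat.ofDigits β (b.digits n)
        < (b - 1) / (β - 1) * β ^ (b.digits n).length := ofDigits_digits_lt_mul_pow_length hb hβ n
      _ ≤ (b - 1) / (β - 1) * (β * (n : ℝ) ^ Real.logb b β) :=
          mul_le_mul_of_nonneg_left (pow_length_digits_le_mul_rpow_logb hb hβ.le hn) ratio_nonneg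
      _ = β * (b - 1) / (β - 1) * (n : ℝ) ^ Real.logb b β := by ring

end Digits

/-- Growth estimate for the `(b,β)`-content function. -/
theorem stmt10 (b β : ℕ) (hb : 2 ≤ b) (hβ : 2 ≤ β) :
    ∀ n : ℕ, 1 ≤ n →
      ((β : ℝ))⁻¹ * (n : ℝ) ^ (Real.log β / Real.log b) < (contentNat b β n : ℝ) ∧
      (contentNat b β n : ℝ) <
        (β : ℝ) * ((b : ℝ) - 1) / ((β : ℝ) - 1) * (n : ℝ) ^ (Real.log β / Real.log b) := by
  intro n hn
  simpa only [contentNat, Nat.coe_ofDigits, Real.log_div_log] using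
    stmt10_general hb (Nat.one_lt_cast.2 hβ) (Nat.one_le_iff_ne_zero.1 hn)
end

section
/- Let b ≥ 2 and β ≥ 2 be integers and let m, n ≥ 0 be real numbers. For i ∈ ℤ define the carry digit r_i := 1 if frac(m/b^{i+1}) + frac(n/b^{i+1}) ≥ 1 and r_i := 0 otherwise, where frac denotes the fractional part. Then c_{b,β}(m) + c_{b,β}(n) = c_{b,β}(m + n) + (b − β)·Σ_{i∈ℤ} r_i·β^i (the sum converging since r_i = 0 for all large i). -/
/-- The `i`-th carry digit when `m + n` is computed in base `b`. -/
noncomputable def carry (b : ℕ) (m n : ℝ) (i : ℤ) : ℝ :=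
  if 1 ≤ Int.fract (m / (b : ℝ) ^ (i + 1)) + Int.fract (n / (b : ℝ) ^ (i + 1)) then 1 else 0

/-!
Digits and carries are both differences of floors: with `q x i = ⌊x / b ^ i⌋`, the `i`-th digit of
`x` is `q x i - b * q x (i + 1)` and the `i`-th carry `r i` of `m + n` is
`q (m + n) (i + 1) - q m (i + 1) - q n (i + 1)`. Hence digitwise addition is off by
`b * r i - r (i - 1)`. Evaluation at `β` turns the shift of `r` into multiplication by `β`, so the
total defect is `b - β` times the value of `r`.
-/

open Filter Set

section Floor

theorem floor_add_eq_floor_add_floor_add_ite {R : Type*} [CommRing R] [LinearOrder R]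
    [IsStrictOrderedRing R] [FloorRing R] (u v : R) :
    ⌊u + v⌋ = ⌊u⌋ + ⌊v⌋ + if 1 ≤ Int.fract u + Int.fract v then 1 else 0 := by
  have hu : (⌊u⌋ : R) + Int.fract u = u := Int.floor_add_fract u
  have hv : (⌊v⌋ : R) + Int.fract v = v := Int.floor_add_fract v
  have hu₀ := Int.fract_nonneg u
  have hv₀ := Int.fract_nonneg v
  have hu₁ := Int.fract_lt_one u
  have hv₁ := Int.fract_lt_one v
  rw [Int.floor_eq_iff]
  split_ifs with h <;> push_cast <;> constructor <;> linarith

theorem eventually_floor_div_zpow_eq_zero {K : Type*} [Field K] [LinearOrder K]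
    [IsStrictOrderedRing K] [FloorRing K] {b x : K} (hb : 1 < b) (hx : 0 ≤ x) :
    ∀ᶠ i : ℤ in atTop, ⌊x / b ^ i⌋ = 0 := by
  obtain ⟨N, hN⟩ := pow_unbounded_of_one_lt x hb
  filter_upwards [eventually_ge_atTop (N : ℤ)] with i hi
  have hpos : 0 < b ^ i := zpow_pos (zero_lt_one.trans hb) i
  have hlt : x < b ^ i :=
    calc x < b ^ (N : ℤ) := by rwa [zpow_natCast]
      _ ≤ b ^ i := zpow_le_zpow_right₀ hb.le hi
  exact Int.floor_eq_zero_iff.2 ⟨div_nonneg hx hpos.le, (div_lt_one hpos).2 hlt⟩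

end Floor

section Digits

variable {b : ℕ} {m n x : ℝ}

/-- The carry digit `carry b m n i` as an integer, so that carry words, like digit words, can be
evaluated in any field. -/
noncomputable def intCarry (b : ℕ) (m n : ℝ) (i : ℤ) : ℤ :=
  if 1 ≤ Int.fract (m / (b : ℝ) ^ (i + 1)) + Int.fract (n / (b : ℝ) ^ (i + 1)) then 1 else 0

theorem carry_eq_intCarry (b : ℕ) (m n : ℝ) (i : ℤ) : carry b m n i = intCarry b m n i := by
  simp only [carry, intCarry, Int.cast_ite, Int.cast_one, Int.cast_zero]

theorem bDigit_eq_floor_div_emod (b : ℕ) (x : ℝ) (i : ℤ) :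
    bDigit b x i = ⌊x / (b : ℝ) ^ i⌋ % b := by
  rw [bDigit, zpow_neg, div_eq_mul_inv]

theorem bDigit_eq_floor_sub (hb : b ≠ 0) (x : ℝ) (i : ℤ) :
    bDigit b x i = ⌊x / (b : ℝ) ^ i⌋ - b * ⌊x / (b : ℝ) ^ (i + 1)⌋ := by
  rw [bDigit_eq_floor_div_emod, zpow_add_one₀ (Nat.cast_ne_zero.2 hb), ← div_div,
    Int.floor_div_natCast, Int.emod_def]

theorem intCarry_eq_floor_sub (b : ℕ) (m n : ℝ) (i : ℤ) :
    intCarry b m n i = ⌊(m + n) / (b : ℝ) ^ (i + 1)⌋ - ⌊m / (b : ℝ) ^ (i + 1)⌋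
      - ⌊n / (b : ℝ) ^ (i + 1)⌋ := by
  rw [add_div, floor_add_eq_floor_add_floor_add_ite, intCarry]
  ring

theorem bDigit_add_bDigit (hb : b ≠ 0) (m n : ℝ) (i : ℤ) :
    bDigit b m i + bDigit b n i =
      bDigit b (m + n) i + b * intCarry b m n i - intCarry b m n (i - 1) := by
  simp only [bDigit_eq_floor_sub hb, intCarry_eq_floor_sub, sub_add_cancel]
  ring

theorem finite_range_bDigit (hb : b ≠ 0) (x : ℝ) : (range (bDigit b x)).Finite := by
  have hb' : (0 : ℤ) < b := by positivity
  refine (finite_Ico (0 : ℤ) b).subset (range_subset_iff.2 fun i => ?_)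
  exact ⟨Int.emod_nonneg _ hb'.ne', Int.emod_lt_of_pos _ hb'⟩

theorem finite_range_intCarry (b : ℕ) (m n : ℝ) : (range (intCarry b m n)).Finite := by
  refine (toFinite {1, 0}).subset (range_subset_iff.2 fun i => ?_)
  exact ite_eq_or_eq _ _ _

theorem eventually_bDigit_eq_zero (hb : 1 < b) (hx : 0 ≤ x) :
    ∀ᶠ i in atTop, bDigit b x i = 0 := by
  filter_upwards [eventually_floor_div_zpow_eq_zero (Nat.one_lt_cast.2 hb) hx] with i hi
  rw [bDigit_eq_floor_div_emod, hi, Int.zero_emod]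

theorem eventually_intCarry_eq_zero (hb : 1 < b) (hm : 0 ≤ m) (hn : 0 ≤ n) :
    ∀ᶠ i in atTop, intCarry b m n i = 0 := by
  have hfloor {x : ℝ} (hx : 0 ≤ x) : ∀ᶠ i : ℤ in atTop, ⌊x / (b : ℝ) ^ (i + 1)⌋ = 0 :=
    (tendsto_atTop_add_const_right atTop 1 tendsto_id).eventually
      (eventually_floor_div_zpow_eq_zero (Nat.one_lt_cast.2 hb) hx)
  filter_upwards [hfloor hm, hfloor hn, hfloor (add_nonneg hm hn)] with i hmi hni hmni
  rw [intCarry_eq_floor_sub, hmi, hni, hmni, sub_zero, sub_zero]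

end Digits

section Evaluation

variable {𝕜 : Type*} [NormedField 𝕜] {β : 𝕜}

/-- The value at `β` of the two-sided word `a` of integer digits: `evalWord (bDigit b x) β` is
the `(b,β)`-content of `x`, for a base `β` in any normed field. It is `0` if the series
diverges. -/
noncomputable def evalWord (a : ℤ → ℤ) (β : 𝕜) : 𝕜 :=
  ∑' i : ℤ, (a i : 𝕜) * β ^ i

theorem summable_mul_zpow_of_isBounded [CompleteSpace 𝕜] (hβ : 1 < ‖β‖) {f : ℤ → 𝕜}
    (hf : Bornology.IsBounded (range f)) (hf₀ : ∀ᶠ i in atTop, f i = 0) :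
    Summable fun i : ℤ => f i * β ^ i := by
  obtain ⟨C, hC⟩ := isBounded_iff_forall_norm_le.1 hf
  refine Summable.of_nat_of_neg ?_ ?_
  · refine Summable.of_norm_bounded_eventually_nat summable_zero ?_
    filter_upwards [tendsto_natCast_atTop_atTop.eventually hf₀] with k hk
    rw [hk, zero_mul, norm_zero]
  · have hgeom : Summable fun k : ℕ => C * ‖β‖⁻¹ ^ k :=
      (summable_geometric_of_lt_one (by positivity) (inv_lt_one_of_one_lt₀ hβ)).mul_left C
    refine hgeom.of_norm_bounded fun k => ?_
    rw [norm_mul, norm_zpow, zpow_neg, zpow_natCast, inv_pow]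
    gcongr
    exact hC _ (mem_range_self _)

theorem summable_intCast_mul_zpow [CompleteSpace 𝕜] (hβ : 1 < ‖β‖) {a : ℤ → ℤ}
    (ha : (range a).Finite) (ha₀ : ∀ᶠ i in atTop, a i = 0) :
    Summable fun i : ℤ => (a i : 𝕜) * β ^ i := by
  have hfin : (range fun i => (a i : 𝕜)).Finite := by
    rw [range_comp' Int.cast a]
    exact ha.image Int.cast
  refine summable_mul_zpow_of_isBounded hβ hfin.isBounded ?_
  filter_upwards [ha₀] with i hi
  rw [hi, Int.cast_zero]

theorem hasSum_sub_one_mul_zpow (hβ : β ≠ 0) {f : ℤ → 𝕜} {s : 𝕜}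
    (hf : HasSum (fun i => f i * β ^ i) s) :
    HasSum (fun i => f (i - 1) * β ^ i) (β * s) := by
  rw [← (Equiv.addRight (1 : ℤ)).hasSum_iff]
  refine (hf.mul_left β).congr_fun fun i => ?_
  simp only [Function.comp_apply, Equiv.coe_addRight, add_sub_cancel_right, zpow_add_one₀ hβ]
  ring

theorem evalWord_add_evalWord_of_carry (hβ : β ≠ 0) {b : ℤ} {d₁ d₂ d r : ℤ → ℤ}
    (hd₁ : Summable fun i => (d₁ i : 𝕜) * β ^ i) (hd₂ : Summable fun i => (d₂ i : 𝕜) * β ^ i)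
    (hr : Summable fun i => (r i : 𝕜) * β ^ i)
    (hcarry : ∀ i, d₁ i + d₂ i = d i + b * r i - r (i - 1)) :
    evalWord d₁ β + evalWord d₂ β = evalWord d β + (b - β) * evalWord r β := by
  have hd : HasSum (fun i => (d i : 𝕜) * β ^ i)
      (evalWord d₁ β + evalWord d₂ β + β * evalWord r β - b * evalWord r β) := by
    refine (((hd₁.hasSum.add hd₂.hasSum).add (hasSum_sub_one_mul_zpow hβ hr.hasSum)).sub
      (hr.hasSum.mul_left (b : 𝕜))).congr_fun fun i => ?_
    have hi : (d₁ i + d₂ i : 𝕜) = d i + b * r i - r (i - 1) := by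
      exact_mod_cast congrArg (Int.cast : ℤ → 𝕜) (hcarry i)
    linear_combination -β ^ i * hi
  have hd_eq : evalWord d β = _ := hd.tsum_eq
  rw [hd_eq]
  ring

end Evaluation

theorem stmt11_general {𝕜 : Type*} [NormedField 𝕜] [CompleteSpace 𝕜] {b : ℕ} (hb : 2 ≤ b)
    {β : 𝕜} (hβ : 1 < ‖β‖) {m n : ℝ} (hm : 0 ≤ m) (hn : 0 ≤ n) :
    evalWord (bDigit b m) β + evalWord (bDigit b n) β =
      evalWord (bDigit b (m + n)) β + ((b : 𝕜) - β) * evalWord (intCarry b m n) β := by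
  have hb₀ : b ≠ 0 := by omega
  have hβ₀ : β ≠ 0 := norm_pos_iff.1 (zero_lt_one.trans hβ)
  have hdigit {x : ℝ} (hx : 0 ≤ x) : Summable fun i => (bDigit b x i : 𝕜) * β ^ i :=
    summable_intCast_mul_zpow hβ (finite_range_bDigit hb₀ x) (eventually_bDigit_eq_zero hb hx)
  have hcarry : Summable fun i => (intCarry b m n i : 𝕜) * β ^ i :=
    summable_intCast_mul_zpow hβ (finite_range_intCarry b m n)
      (eventually_intCarry_eq_zero hb hm hn)
  exact_mod_cast evalWord_add_evalWord_of_carry hβ₀ (hdigit hm) (hdigit hn) hcarry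
    (bDigit_add_bDigit hb₀ m n)

/-- The carry-digit word accounts exactly for the failure of additivity of the content. -/
theorem stmt11 (b β : ℕ) (hb : 2 ≤ b) (hβ : 2 ≤ β)
    (m n : ℝ) (hm : 0 ≤ m) (hn : 0 ≤ n) :
    content b β m + content b β n =
      content b β (m + n) + ((b : ℝ) - (β : ℝ)) * ∑' i : ℤ, carry b m n i * (β : ℝ) ^ i := by
  have hβ_norm : 1 < ‖(β : ℝ)‖ := by rwa [Real.norm_natCast, Nat.one_lt_cast]
  simpa only [content, carry_eq_intCarry, evalWord] using stmt11_general hb hβ_norm hm hn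
end

section
/- Let b and d be integers with 1 < d ≤ b, and for i ≥ 1 set a_i := ⌊b^i/d⌋ − b·⌊b^{i−1}/d⌋ (so 0.a_1 a_2 a_3… is the base-b expansion of 1/d). Then for every k ≥ 1: a_i = (b−d)^{i−1} for all i = 1, …, k if and only if (b−d)^k < d. Moreover, if a_i = (b−d)^{i−1} for all i = 1, …, k−1, then a_k = (b−d)^{k−1} + ⌊(b−d)^k/d⌋. -/
/-!
Write `b = c + d`. In the long division of `1` by `d`, the digit after the first `n` is
`⌊b * r / d⌋`, where `r = b ^ n % d = c ^ n % d` is the current remainder. As long as `c ^ n < d`,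
this remainder is `c ^ n` itself, so the digit is `c ^ n + ⌊c ^ (n + 1) / d⌋`, which equals `c ^ n`
exactly when the next power of `c` is still below `d`.
-/

/-- The digit of `1 / d` in base `b` at position `n + 1` after the radix point; indexing from zero
avoids the truncated exponent `i - 1`. The subtraction never truncates, since
`b * ⌊x⌋ ≤ ⌊b * x⌋`. -/
def unitFracDigit (b d n : ℕ) : ℕ :=
  b ^ (n + 1) / d - b * (b ^ n / d)

theorem mul_div_sub_mul_div_eq_mul_mod_div (b m d : ℕ) :
    b * m / d - b * (m / d) = b * (m % d) / d := by
  rcases d.eq_zero_or_pos with rfl | hd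
  · simp
  · have hsplit : b * m = b * (m % d) + d * (b * (m / d)) := by
      conv_lhs => rw [← Nat.mod_add_div m d]
      ring
    rw [hsplit, Nat.add_mul_div_left _ _ hd, Nat.add_sub_cancel]

theorem unitFracDigit_eq_mul_mod_div (b d n : ℕ) :
    unitFracDigit b d n = b * (b ^ n % d) / d := by
  rw [unitFracDigit, pow_succ', mul_div_sub_mul_div_eq_mul_mod_div]

theorem pow_lt_of_pow_lt_of_le {M : Type*} [MonoidWithZero M] [LinearOrder M]
    [ZeroLEOneClass M] [PosMulMono M] {c d : M} {m n : ℕ} (hc : 0 ≤ c) (hd : 1 < d)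
    (h : c ^ n < d) (hmn : m ≤ n) : c ^ m < d := by
  rcases le_total c 1 with hc_le | hc_ge
  · exact (pow_le_one₀ hc hc_le).trans_lt hd
  · exact (pow_le_pow_right₀ hc_ge hmn).trans_lt h

section

variable {c d n : ℕ}

theorem unitFracDigit_add_of_pow_lt (h : c ^ n < d) :
    unitFracDigit (c + d) d n = c ^ n + c ^ (n + 1) / d := by
  have hmod : (c + d) ^ n % d = c ^ n := by
    rw [Nat.pow_mod, Nat.add_mod_right, ← Nat.pow_mod, Nat.mod_eq_of_lt h]
  rw [unitFracDigit_eq_mul_mod_div, hmod, add_mul, ← pow_succ',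
    Nat.add_mul_div_left _ _ (Nat.zero_lt_of_lt h), add_comm]

theorem unitFracDigit_add_eq_pow_iff (h : c ^ n < d) :
    unitFracDigit (c + d) d n = c ^ n ↔ c ^ (n + 1) < d := by
  rw [unitFracDigit_add_of_pow_lt h, Nat.add_eq_left,
    Nat.div_eq_zero_iff_lt (Nat.zero_lt_of_lt h)]

theorem forall_unitFracDigit_add_eq_pow_iff (hd : 1 < d) :
    (∀ i < n, unitFracDigit (c + d) d i = c ^ i) ↔ c ^ n < d := by
  induction n with
  | zero => simpa using hd
  | succ n ih =>
    rw [Nat.forall_lt_succ_right, ih, and_congr_right unitFracDigit_add_eq_pow_iff]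
    exact and_iff_right_of_imp fun h => pow_lt_of_pow_lt_of_le c.zero_le hd h n.le_succ

end

/-- Digits of the base-`b` expansion of `1/d`. -/
theorem stmt13 (b d : ℕ) (hd : 1 < d) (hdb : d ≤ b) (a : ℕ → ℕ)
    (ha : ∀ i, 1 ≤ i → a i = b ^ i / d - b * (b ^ (i - 1) / d)) :
    ∀ k : ℕ, 1 ≤ k →
      ((∀ i, 1 ≤ i → i ≤ k → a i = (b - d) ^ (i - 1)) ↔ (b - d) ^ k < d) ∧
      ((∀ i, 1 ≤ i → i ≤ k - 1 → a i = (b - d) ^ (i - 1)) →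
        a k = (b - d) ^ (k - 1) + (b - d) ^ k / d) := by
  obtain ⟨c, rfl⟩ := Nat.exists_eq_add_of_le' hdb
  rw [Nat.add_sub_cancel]
  have digit_succ (n : ℕ) : a (n + 1) = unitFracDigit (c + d) d n := ha (n + 1) n.succ_pos
  have digits_iff (k : ℕ) : (∀ i, 1 ≤ i → i ≤ k → a i = c ^ (i - 1)) ↔ c ^ k < d := by
    rw [← forall_unitFracDigit_add_eq_pow_iff hd]
    refine ⟨fun h i hik => ?_, fun h i hi hik => ?_⟩
    · rw [← digit_succ, h (i + 1) i.succ_pos hik, Nat.add_sub_cancel]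
    · obtain ⟨n, rfl⟩ := Nat.exists_eq_add_of_le' hi
      rw [digit_succ, h n hik, Nat.add_sub_cancel]
  intro k hk
  refine ⟨digits_iff k, fun h => ?_⟩
  obtain ⟨n, rfl⟩ := Nat.exists_eq_add_of_le' hk
  rw [digit_succ, unitFracDigit_add_of_pow_lt ((digits_iff n).mp h), Nat.add_sub_cancel]
end

section
/- Let b and d be integers with 1 < d ≤ b, and for i ≥ 1 set a_i := ⌊b^i/d⌋ − b·⌊b^{i−1}/d⌋ (the digits of the base-b expansion of 1/d). Then exactly one of the following five cases occurs: (1) a_1 ≥ 2, which holds if and only if d ≤ b/2; (2) a_1 = 1 and a_2 ≥ 3, which holds if and only if b/2 < d ≤ b²/(b+3); (3) a_1 = 1, a_2 = 2, and a_3 ≥ 4, which holds if and only if b > 6 and d = b − 2; (4) a_i = 1 for all i ≥ 1, which holds if and only if d = b − 1; (5) a_1 = 1 and a_i = 0 for all i ≥ 2, which holds if and only if d = b. -/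
/-!
The remainder of `b ^ n` modulo `d` determines all digits of `1 / d` after the `n`-th one. If
`d ≤ b < 2 * d` and `r = b - d`, then `b ≡ r` modulo `d`, so the first digit is `1` and the second
one is `b * r / d = r + r ^ 2 / d`. This is `0` or `1` exactly when `r` is, and it is `2` exactly
when `r = 2` and `4 < d`. So the first two digits `(2+, _)`, `(1, 3+)`, `(1, 2)`, `(1, 1)`, `(1, 0)`
separate the five cases, and the conditions on the later digits are automatic.
-/

/-- The `i`-th digit after the radix point, counted from `i = 1`, of the base-`b` expansion of
`1 / d`. For `1 ≤ i` the subtraction does not truncate; the value at `i = 0` is junk. -/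
def invDigit (b d i : ℕ) : ℕ :=
  b ^ i / d - b * (b ^ (i - 1) / d)

section Digits

variable {b d : ℕ}

theorem invDigit_succ (hd : 0 < d) (n : ℕ) : invDigit b d (n + 1) = b * (b ^ n % d) / d := by
  have hpow : b ^ (n + 1) = b * (b ^ n % d) + d * (b * (b ^ n / d)) := by
    conv_lhs => rw [pow_succ', ← Nat.mod_add_div (b ^ n) d]
    ring
  rw [invDigit, Nat.add_sub_cancel, hpow, Nat.add_mul_div_left _ _ hd, Nat.add_sub_cancel]

theorem invDigit_succ_of_modEq_one (hd : 1 < d) (h : b ≡ 1 [MOD d]) (n : ℕ) :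
    invDigit b d (n + 1) = b / d := by
  have hmod : b ^ n % d = 1 := by
    rw [h.pow n, one_pow, Nat.mod_eq_of_lt hd]
  rw [invDigit_succ (by omega), hmod, mul_one]

theorem invDigit_succ_of_dvd (hd : 0 < d) {n : ℕ} (h : d ∣ b ^ n) :
    invDigit b d (n + 1) = 0 := by
  rw [invDigit_succ hd, Nat.mod_eq_zero_of_dvd h, mul_zero, Nat.zero_div]

theorem invDigit_one (hd : 1 < d) : invDigit b d 1 = b / d := by
  rw [invDigit_succ (n := 0) (by omega), pow_zero, Nat.mod_eq_of_lt hd, mul_one]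

theorem le_invDigit_one_iff (hd : 1 < d) {k : ℕ} : k ≤ invDigit b d 1 ↔ k * d ≤ b := by
  rw [invDigit_one hd, Nat.le_div_iff_mul_le (by omega)]

end Digits

section SecondDigit

variable {d r : ℕ}

theorem invDigit_add_one_eq_one_iff (hd : 1 < d) : invDigit (d + r) d 1 = 1 ↔ r < d := by
  rw [invDigit_one hd, Nat.add_div_left _ (by omega), Nat.add_eq_right, Nat.div_eq_zero_iff]
  omega

theorem invDigit_add_two (hr : r < d) : invDigit (d + r) d 2 = r + r ^ 2 / d := by
  have hd : 0 < d := by omega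
  rw [invDigit_succ (n := 1) hd, pow_one, Nat.add_mod_left, Nat.mod_eq_of_lt hr, add_mul, ← sq,
    Nat.mul_add_div hd]

theorem invDigit_add_two_eq_zero_iff (hr : r < d) : invDigit (d + r) d 2 = 0 ↔ r = 0 := by
  rw [invDigit_add_two hr, Nat.add_eq_zero_iff]
  exact and_iff_left_of_imp (by rintro rfl; simp)

theorem invDigit_add_two_eq_one_iff (hd : 1 < d) (hr : r < d) :
    invDigit (d + r) d 2 = 1 ↔ r = 1 := by
  rw [invDigit_add_two hr]
  constructor
  · intro h
    have hr1 : r ≤ 1 := h ▸ Nat.le_add_right r _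
    interval_cases r
    · simp at h
    · rfl
  · rintro rfl
    rw [one_pow, Nat.div_eq_of_lt hd]

theorem invDigit_add_two_eq_two_iff (hr : r < d) :
    invDigit (d + r) d 2 = 2 ↔ r = 2 ∧ 4 < d := by
  rw [invDigit_add_two hr]
  constructor
  · intro h
    have hr2 : r ≤ 2 := h ▸ Nat.le_add_right r _
    interval_cases r
    · simp at h
    · simp [Nat.div_eq_of_lt hr] at h
    · exact ⟨rfl, (Nat.div_eq_zero_iff.mp (Nat.add_eq_left.mp h)).resolve_left (by omega)⟩
  · rintro ⟨rfl, hd⟩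
    exact Nat.add_eq_left.mpr (Nat.div_eq_of_lt hd)

theorem three_le_invDigit_add_two_iff (hr : r < d) :
    3 ≤ invDigit (d + r) d 2 ↔ d * (d + r + 3) ≤ (d + r) ^ 2 := by
  have hd : 0 < d := by omega
  have hsq : (d + r) ^ 2 = d * (d + r) + (d * r + r ^ 2) := by ring
  rw [invDigit_add_two hr, ← Nat.mul_add_div hd, Nat.le_div_iff_mul_le hd, hsq, mul_add,
    Nat.add_le_add_iff_left, mul_comm]

end SecondDigit

section FirstTwoDigits

variable {b d : ℕ}

theorem invDigit_one_eq_one_and_three_le_invDigit_two_iff (hd : 1 < d) (hdb : d ≤ b) :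
    invDigit b d 1 = 1 ∧ 3 ≤ invDigit b d 2 ↔ b < 2 * d ∧ d * (b + 3) ≤ b ^ 2 := by
  obtain ⟨r, rfl⟩ := Nat.exists_eq_add_of_le hdb
  rw [invDigit_add_one_eq_one_iff hd, and_congr_right three_le_invDigit_add_two_iff, two_mul,
    Nat.add_lt_add_iff_left]

theorem invDigit_one_eq_one_and_invDigit_two_eq_two_iff (hd : 1 < d) (hdb : d ≤ b) :
    invDigit b d 1 = 1 ∧ invDigit b d 2 = 2 ↔ 6 < b ∧ d = b - 2 := by
  obtain ⟨r, rfl⟩ := Nat.exists_eq_add_of_le hdb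
  rw [invDigit_add_one_eq_one_iff hd, and_congr_right invDigit_add_two_eq_two_iff]
  omega

theorem invDigit_one_eq_one_and_invDigit_two_eq_one_iff (hd : 1 < d) (hdb : d ≤ b) :
    invDigit b d 1 = 1 ∧ invDigit b d 2 = 1 ↔ d = b - 1 := by
  obtain ⟨r, rfl⟩ := Nat.exists_eq_add_of_le hdb
  rw [invDigit_add_one_eq_one_iff hd, and_congr_right (invDigit_add_two_eq_one_iff hd)]
  omega

theorem invDigit_one_eq_one_and_invDigit_two_eq_zero_iff (hd : 1 < d) (hdb : d ≤ b) :
    invDigit b d 1 = 1 ∧ invDigit b d 2 = 0 ↔ d = b := by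
  obtain ⟨r, rfl⟩ := Nat.exists_eq_add_of_le hdb
  rw [invDigit_add_one_eq_one_iff hd, and_congr_right invDigit_add_two_eq_zero_iff]
  omega

end FirstTwoDigits

section LaterDigits

variable {b d : ℕ}

theorem four_le_invDigit_three (hd : 1 < d) (hdb : d ≤ b) (h₁ : invDigit b d 1 = 1)
    (h₂ : invDigit b d 2 = 2) : 4 ≤ invDigit b d 3 := by
  obtain ⟨hb, hdb'⟩ := (invDigit_one_eq_one_and_invDigit_two_eq_two_iff hd hdb).mp ⟨h₁, h₂⟩
  have hmod : b ^ 2 % d = 4 := by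
    obtain rfl : b = d + 2 := by omega
    rw [Nat.pow_mod, Nat.add_mod_left, ← Nat.pow_mod, Nat.mod_eq_of_lt (by omega)]
  rw [invDigit_succ (by omega), hmod, Nat.le_div_iff_mul_le (by omega)]
  omega

theorem forall_invDigit_eq_one_iff (hd : 1 < d) (hdb : d ≤ b) :
    (∀ i, 1 ≤ i → invDigit b d i = 1) ↔ invDigit b d 1 = 1 ∧ invDigit b d 2 = 1 := by
  refine ⟨fun h ↦ ⟨h 1 le_rfl, h 2 one_le_two⟩, fun h i hi ↦ ?_⟩
  have hb : b = d + 1 := by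
    have := (invDigit_one_eq_one_and_invDigit_two_eq_one_iff hd hdb).mp h
    omega
  have hmod : b ≡ 1 [MOD d] := by
    rw [hb]
    exact Nat.add_modEq_left
  obtain ⟨n, rfl⟩ := Nat.exists_eq_add_of_le' hi
  rw [invDigit_succ_of_modEq_one hd hmod, ← invDigit_one hd, h.1]

theorem invDigit_one_eq_one_and_forall_eq_zero_iff (hd : 1 < d) (hdb : d ≤ b) :
    (invDigit b d 1 = 1 ∧ ∀ i, 2 ≤ i → invDigit b d i = 0) ↔
      invDigit b d 1 = 1 ∧ invDigit b d 2 = 0 := by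
  refine and_congr_right fun h₁ ↦ ⟨fun h ↦ h 2 le_rfl, fun h₂ i hi ↦ ?_⟩
  obtain rfl := (invDigit_one_eq_one_and_invDigit_two_eq_zero_iff hd hdb).mp ⟨h₁, h₂⟩
  obtain ⟨n, rfl⟩ := Nat.exists_eq_add_of_le' hi
  exact invDigit_succ_of_dvd (by omega) (dvd_pow_self d n.succ_ne_zero)

end LaterDigits

theorem existsUnique_digit_pair_case {x : ℕ} (hx : 1 ≤ x) (y : ℕ) :
    ∃! c : Fin 5,
      [2 ≤ x, x = 1 ∧ 3 ≤ y, x = 1 ∧ y = 2, x = 1 ∧ y = 1, x = 1 ∧ y = 0].get c := by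
  let index : Fin 5 :=
    if 2 ≤ x then 0 else if 3 ≤ y then 1 else if y = 2 then 2 else if y = 1 then 3 else 4
  refine (existsUnique_congr fun c ↦ ?_).mpr (existsUnique_eq (a' := index))
  fin_cases c <;> grind

/-- Five-case structure of the base-`b` expansion of `1/d`, with all case
characterizations, and the fact that exactly one case occurs. -/
theorem stmt14 (b d : ℕ) (hd : 1 < d) (hdb : d ≤ b) (a : ℕ → ℕ)
    (ha : ∀ i, 1 ≤ i → a i = b ^ i / d - b * (b ^ (i - 1) / d)) :
    ((2 ≤ a 1) ↔ 2 * d ≤ b) ∧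
    ((a 1 = 1 ∧ 3 ≤ a 2) ↔ (b < 2 * d ∧ d * (b + 3) ≤ b ^ 2)) ∧
    ((a 1 = 1 ∧ a 2 = 2 ∧ 4 ≤ a 3) ↔ (6 < b ∧ d = b - 2)) ∧
    ((∀ i, 1 ≤ i → a i = 1) ↔ d = b - 1) ∧
    ((a 1 = 1 ∧ ∀ i, 2 ≤ i → a i = 0) ↔ d = b) ∧
    (∃! c : Fin 5,
      [2 ≤ a 1,
       a 1 = 1 ∧ 3 ≤ a 2,
       a 1 = 1 ∧ a 2 = 2 ∧ 4 ≤ a 3,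
       ∀ i, 1 ≤ i → a i = 1,
       a 1 = 1 ∧ ∀ i, 2 ≤ i → a i = 0].get c) := by
  have ha' : ∀ i, 1 ≤ i → a i = invDigit b d i := ha
  have ha_one : (∀ i, 1 ≤ i → a i = 1) ↔ ∀ i, 1 ≤ i → invDigit b d i = 1 :=
    forall₂_congr fun i hi ↦ by rw [ha' i hi]
  have ha_zero : (∀ i, 2 ≤ i → a i = 0) ↔ ∀ i, 2 ≤ i → invDigit b d i = 0 :=
    forall₂_congr fun i hi ↦ by rw [ha' i (by omega)]
  have hthree : invDigit b d 1 = 1 ∧ invDigit b d 2 = 2 ∧ 4 ≤ invDigit b d 3 ↔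
      invDigit b d 1 = 1 ∧ invDigit b d 2 = 2 :=
    and_congr_right fun h₁ ↦ and_iff_left_of_imp (four_le_invDigit_three hd hdb h₁)
  have hone : 1 ≤ invDigit b d 1 := (le_invDigit_one_iff hd).mpr (by rwa [one_mul])
  rw [ha_one, ha_zero, ha' 1 le_rfl, ha' 2 (by omega), ha' 3 (by omega), hthree,
    forall_invDigit_eq_one_iff hd hdb, invDigit_one_eq_one_and_forall_eq_zero_iff hd hdb]
  exact ⟨le_invDigit_one_iff hd,
    invDigit_one_eq_one_and_three_le_invDigit_two_iff hd hdb,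
    invDigit_one_eq_one_and_invDigit_two_eq_two_iff hd hdb,
    invDigit_one_eq_one_and_invDigit_two_eq_one_iff hd hdb,
    invDigit_one_eq_one_and_invDigit_two_eq_zero_iff hd hdb,
    existsUnique_digit_pair_case hone _⟩
end

section
/- Let b, d, D be integers with 1 ≤ D < d ≤ b − 2 and β := b − D, and suppose that at least one of the following holds: (1) d ≤ b/2, or (2) D < d·(1 − 1/(b−d)). Then c_{b,β}(D/d) ≥ D·(β + 1)/(β·(β − 1)). -/
/-!
A base-`b` digit of `x` is `b * fract y - fract (b * y)` for the appropriate shift `y` of `x`.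
Reading the digits in base `β` instead, the sum no longer telescopes but leaves
`x + (b - β) * ∑' k, fract (x * b ^ k) / β ^ (k + 1)`, in which all terms are nonnegative if
`β ≤ b`. For `x = D / d` the first two terms of the series, which involve only `D` and
`r = b * D % d`, are enough: with `e = b - d`, the bound reduces to
`2 * d * β ≤ (e * β + r) * (β - 1)`. For `d ≤ e` this needs only `3 ≤ β`. Otherwise
`d < e * (d - D)`, and since `d` divides `e * (d - D) + r`, that sum is at least `2 * d`.
-/

open Finset Int

section Content

variable {b β : ℕ} {x : ℝ}

lemma bDigit_eq_mul_fract_sub_fract (hb : b ≠ 0) (x : ℝ) (i : ℤ) :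
    (bDigit b x i : ℝ) =
      b * fract (x * (b : ℝ) ^ (-(i + 1))) - fract (x * (b : ℝ) ^ (-i)) := by
  set y := x * (b : ℝ) ^ (-(i + 1)) with hy
  have hshift : x * (b : ℝ) ^ (-i) = b * y := by
    rw [hy, mul_left_comm, ← zpow_one_add₀ (by exact_mod_cast hb)]
    ring_nf
  rw [bDigit, hshift, Int.emod_def, natCast_mul_floor_div_cancel hb, fract, fract]
  push_cast
  ring

lemma bDigit_eq_zero_of_nonneg (hb : b ≠ 0) (hx : x ∈ Set.Ico 0 1) {i : ℤ} (hi : 0 ≤ i) :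
    bDigit b x i = 0 := by
  have hb1 : (1 : ℝ) ≤ b := by exact_mod_cast Nat.one_le_iff_ne_zero.2 hb
  have hpow : (b : ℝ) ^ (-i) ≤ 1 := zpow_le_one_of_nonpos₀ hb1 (neg_nonpos.2 hi)
  have hfloor : ⌊x * (b : ℝ) ^ (-i)⌋ = 0 :=
    floor_eq_zero_iff.2 ⟨mul_nonneg hx.1 (by positivity),
      (mul_le_of_le_one_right hx.1 hpow).trans_lt hx.2⟩
  rw [bDigit, hfloor, zero_emod]

lemma content_eq_tsum_negSucc (β : ℕ) (hb : b ≠ 0) (hx : x ∈ Set.Ico 0 1) :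
    content b β x = ∑' k : ℕ, (bDigit b x (negSucc k) : ℝ) * (β : ℝ) ^ negSucc k := by
  have hinj : Function.Injective negSucc := fun _ _ => negSucc.inj
  refine (hinj.tsum_eq fun i hi => ?_).symm
  cases i with
  | ofNat n => exact absurd (by simp [bDigit_eq_zero_of_nonneg hb hx (natCast_nonneg n)]) hi
  | negSucc k => exact Set.mem_range_self k

lemma summable_fract_div_pow (hβ : 1 < β) (y : ℕ → ℝ) :
    Summable fun k => fract (y k) / (β : ℝ) ^ k := by
  have hβ' : (β : ℝ)⁻¹ < 1 := inv_lt_one_of_one_lt₀ (by exact_mod_cast hβ)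
  refine (summable_geometric_of_lt_one (by positivity) hβ').of_nonneg_of_le
    (fun k => div_nonneg (fract_nonneg _) (by positivity)) fun k => ?_
  rw [inv_pow, ← one_div]
  gcongr
  exact (fract_lt_one _).le

lemma content_eq_add_mul_tsum_fract (hb : b ≠ 0) (hβ : 1 < β) (hx : x ∈ Set.Ico 0 1) :
    content b β x = x + (b - β) * ∑' k : ℕ, fract (x * (b : ℝ) ^ k) / (β : ℝ) ^ (k + 1) := by
  have hβ0 : (β : ℝ) ≠ 0 := by positivity
  set u : ℕ → ℝ := fun k => fract (x * (b : ℝ) ^ k) / (β : ℝ) ^ k with hu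
  have hsum : Summable u := summable_fract_div_pow hβ _
  have hu0 : u 0 = x := by simp [hu, fract_eq_self.2 hx]
  have hdigit (k : ℕ) :
      (bDigit b x (negSucc k) : ℝ) * (β : ℝ) ^ negSucc k = b / β * u k - u (k + 1) := by
    have hk : -(negSucc k + 1) = (k : ℤ) := by omega
    rw [bDigit_eq_mul_fract_sub_fract hb, hk, neg_negSucc, zpow_natCast, zpow_natCast,
      zpow_negSucc]
    simp only [hu]
    field_simp
    ring
  calc content b β x = ∑' k, (b / β * u k - u (k + 1)) := by
        rw [content_eq_tsum_negSucc β hb hx, tsum_congr hdigit]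
    _ = b / β * ∑' k, u k - ∑' k, u (k + 1) := by
        rw [(hsum.mul_left _).tsum_sub ((summable_nat_add_iff 1).2 hsum), tsum_mul_left]
    _ = x + (b - β) * ((∑' k, u k) / β) := by
        rw [hsum.tsum_eq_zero_add, hu0]
        field_simp
        ring
    _ = _ := by simp only [hu, ← tsum_div_const, div_div, pow_succ]

lemma add_mul_sum_fract_le_content (hβ : 1 < β) (hβb : β ≤ b) (hx : x ∈ Set.Ico 0 1) (n : ℕ) :
    x + (b - β) * ∑ k ∈ range n, fract (x * (b : ℝ) ^ k) / (β : ℝ) ^ (k + 1) ≤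
      content b β x := by
  have hsum : Summable fun k : ℕ => fract (x * (b : ℝ) ^ k) / (β : ℝ) ^ (k + 1) := by
    simpa only [pow_succ, div_div] using
      (summable_fract_div_pow hβ fun k => x * (b : ℝ) ^ k).div_const (β : ℝ)
  have hbβ : (0 : ℝ) ≤ b - β := sub_nonneg.2 (by exact_mod_cast hβb)
  rw [content_eq_add_mul_tsum_fract (by omega) hβ hx]
  gcongr
  exact hsum.sum_le_tsum _ fun k _ => div_nonneg (fract_nonneg _) (by positivity)

lemma le_content_natCast_div {n d : ℕ} (hβ : 1 < β) (hβb : β ≤ b) (hnd : n < d) :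
    ((b : ℝ) * n * β + (b - β) * (b * n % d : ℕ)) / (d * β ^ 2) ≤ content b β (n / d) := by
  have hd : (0 : ℝ) < d := by exact_mod_cast n.zero_le.trans_lt hnd
  have hx : (n : ℝ) / d ∈ Set.Ico 0 1 :=
    ⟨by positivity, (div_lt_one hd).2 (by exact_mod_cast hnd)⟩
  have hfract : fract ((n : ℝ) / d * b) = (b * n % d : ℕ) / d := by
    rw [← fract_div_natCast_eq_div_natCast_mod]
    push_cast
    ring_nf
  calc _ = (n : ℝ) / d + (b - β) * (n / d / β + (b * n % d : ℕ) / d / β ^ 2) := by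
        field_simp
        ring
    _ = n / d + (b - β) * ∑ k ∈ range 2, fract ((n : ℝ) / d * b ^ k) / (β : ℝ) ^ (k + 1) := by
        simp [sum_range_succ, hfract, fract_eq_self.2 hx]
    _ ≤ _ := add_mul_sum_fract_le_content hβ hβb hx 2

lemma le_content_natCast_div_of_two_mul_le {d e D : ℕ} (hβ : 1 < β) (hβD : β + D = d + e)
    (hDd : D < d)
    (h : 2 * (d : ℝ) * β ≤ (e * β + ((d + e) * D % d : ℕ)) * (β - 1)) :
    (D : ℝ) * (β + 1) / (β * (β - 1)) ≤ content (d + e) β (D / d) := by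
  have hβ1 : (0 : ℝ) < β - 1 := sub_pos.2 (by exact_mod_cast hβ)
  have hd : (0 : ℝ) < d := by exact_mod_cast D.zero_le.trans_lt hDd
  have hD : ((d + e : ℕ) : ℝ) - β = D := by
    rw [← hβD]
    push_cast
    ring
  set r := (d + e) * D % d
  calc (D : ℝ) * (β + 1) / (β * (β - 1)) = D * (d * β * (β + 1)) / (d * β ^ 2 * (β - 1)) := by
        field_simp
    _ ≤ D * (((d + e) * β + r) * (β - 1)) / (d * β ^ 2 * (β - 1)) := by
        gcongr D * ?_ / _
        linarith
    _ = (((d + e : ℕ) : ℝ) * D * β + ((d + e : ℕ) - β) * r) / (d * β ^ 2) := by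
        rw [hD]
        push_cast
        field_simp
    _ ≤ _ := le_content_natCast_div hβ (by omega) hDd

end Content

section Arithmetic

lemma two_mul_le_add_mod_of_dvd_add {d m n : ℕ} (hdvd : d ∣ m + n) (hm : d < m) :
    2 * d ≤ m + n % d := by
  have hdvd' : d ∣ m + n % d := by
    rwa [Nat.dvd_iff_mod_eq_zero, Nat.add_mod_mod, ← Nat.dvd_iff_mod_eq_zero]
  exact Nat.le_of_lt_add_of_dvd (by omega) (Nat.dvd_mul_left d 2) hdvd'

lemma lt_mul_one_sub_one_div_iff {K : Type*} [Field K] [LinearOrder K] [IsStrictOrderedRing K]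
    {d e D : K} (he : 0 < e) :
    D < d * (1 - 1 / e) ↔ d < e * (d - D) := by
  have hscale : d * (1 - 1 / e) = (d * e - d) / e := by field_simp
  rw [hscale, lt_div_iff₀ he]
  constructor <;> intro h <;> linarith

variable {R : Type*} [CommRing R] [LinearOrder R] [IsStrictOrderedRing R] {d e r : R}

lemma two_mul_mul_le_mul_sub_one_of_le {β : R} (he : 0 ≤ e) (hr : 0 ≤ r) (hβ : 3 ≤ β)
    (hde : d ≤ e) :
    2 * d * β ≤ (e * β + r) * (β - 1) := by
  have : 0 ≤ β := by linarith
  calc 2 * d * β ≤ 2 * e * β := by gcongr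
    _ ≤ (e * β + r) * 2 := by linarith
    _ ≤ (e * β + r) * (β - 1) := by
        gcongr
        linarith

lemma two_mul_mul_add_le_mul_sub_one_of_le {f : R} (he : 2 ≤ e) (hf : 0 ≤ f)
    (hr : r ≤ e * (e + f)) (h : 2 * d ≤ e * f + r) :
    2 * d * (e + f) ≤ (e * (e + f) + r) * (e + f - 1) := by
  have : 0 ≤ e := by linarith
  have hslack : e * (e + f) ≤ e * (e + f) * (e - 1) :=
    le_mul_of_one_le_right (by positivity) (by linarith)
  calc 2 * d * (e + f) ≤ (e * f + r) * (e + f) := by gcongr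
    _ ≤ (e * f + r) * (e + f) + (e * (e + f) * (e - 1) - r) := by linarith
    _ = (e * (e + f) + r) * (e + f - 1) := by ring

end Arithmetic

/-- Lower bound on the `(b, b−D)`-content of `D/d`. -/
theorem stmt18 (b d D : ℕ) (hD1 : 1 ≤ D) (hDd : D < d) (hdb : d ≤ b - 2)
    (hcase : 2 * d ≤ b ∨ (D : ℝ) < (d : ℝ) * (1 - 1 / ((b : ℝ) - (d : ℝ)))) :
    (D : ℝ) * (((b - D : ℕ) : ℝ) + 1) /
        (((b - D : ℕ) : ℝ) * (((b - D : ℕ) : ℝ) - 1)) ≤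
      content b (b - D) ((D : ℝ) / (d : ℝ)) := by
  obtain ⟨f, rfl⟩ := Nat.exists_eq_add_of_le hDd.le
  obtain ⟨e, rfl⟩ := Nat.exists_eq_add_of_le (show D + f ≤ b by omega)
  have hβ : D + f + e - D = e + f := by omega
  rw [hβ]
  refine le_content_natCast_div_of_two_mul_le (by omega) (by omega) hDd ?_
  have he : (2 : ℝ) ≤ e := by exact_mod_cast (by omega : 2 ≤ e)
  rcases hcase with hde | hlt
  · exact two_mul_mul_le_mul_sub_one_of_le (by positivity) (by positivity)
      (by exact_mod_cast (by omega : 3 ≤ e + f)) (by exact_mod_cast (by omega : D + f ≤ e))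
  · have hlt' : D + f < e * f := by
      have h := (lt_mul_one_sub_one_div_iff (by push_cast; linarith)).1 hlt
      push_cast [add_sub_cancel_left] at h
      exact_mod_cast h
    have hdvd : D + f ∣ e * f + (D + f + e) * D := ⟨D + e, by ring⟩
    have hr : (D + f + e) * D % (D + f) ≤ e * (e + f) :=
      ((Nat.mod_lt _ (by omega)).trans hlt').le.trans (Nat.mul_le_mul_left e (by omega))
    rw [Nat.cast_add e f]
    refine two_mul_mul_add_le_mul_sub_one_of_le he (by positivity) (by exact_mod_cast hr) ?_
    exact_mod_cast two_mul_le_add_mod_of_dvd_add hdvd hlt'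
end
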